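/- With $C^\beta(x,\eta) := \inf\{H(\kappa\,|\,\gamma_x) + \tfrac{\beta}{2}\mathcal{W}_2^2(\kappa,\eta) : \kappa \in \mathcal{P}_2(\mathbb{R}^d),\ \bar\kappa = \bar\eta\}$, one has for every $x \in \mathbb{R}^d$ and $\eta \in \mathcal{P}_2(\mathbb{R}^d)$: $\lim_{\beta \uparrow \infty} C^\beta(x,\eta) = H(\eta\,|\,\gamma_x)$ (possibly $+\infty$) and $\lim_{\beta \downarrow 0} C^\beta(x,\eta) = \tfrac12|\bar\eta - x|^2$. -/

import Mathlib

open MeasureTheory ProbabilityTheory Filter Topology Set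
open scoped ENNReal RealInnerProductSpace

noncomputable section

abbrev Euc (d : ℕ) := EuclideanSpace ℝ (Fin d)

/-- Density of the Gaussian with mean `x` and identity covariance. -/
def gaussDensity {d : ℕ} (x y : Euc d) : ℝ :=
  (2 * Real.pi) ^ (-(d : ℝ) / 2) * Real.exp (-‖y - x‖ ^ 2 / 2)

/-- Gaussian measure with mean `x` and identity covariance. -/
def gaussian {d : ℕ} (x : Euc d) : Measure (Euc d) :=
  volume.withDensity fun y => ENNReal.ofReal (gaussDensity x y)

/-- Finite second moment. -/
def FiniteSecondMoment {d : ℕ} (μ : Measure (Euc d)) : Prop :=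
  ∫⁻ x, ENNReal.ofReal (‖x‖ ^ 2) ∂μ < ⊤

/-- Barycenter of a measure. -/
def bary {d : ℕ} (μ : Measure (Euc d)) : Euc d := ∫ x, x ∂μ

open Classical in
/-- Relative entropy `H(ρ | η)`, valued in `ℝ≥0∞`. -/
def relEnt {d : ℕ} (ρ η : Measure (Euc d)) : ℝ≥0∞ :=
  if ρ ≪ η ∧ Integrable (fun x => Real.log (ρ.rnDeriv η x).toReal) ρ then
    ENNReal.ofReal (∫ x, Real.log (ρ.rnDeriv η x).toReal ∂ρ)
  else ⊤

/-- Squared 2-Wasserstein distance. -/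
def W2sq {d : ℕ} (μ ν : Measure (Euc d)) : ℝ≥0∞ :=
  ⨅ (π : Measure (Euc d × Euc d)) (_ : π.fst = μ ∧ π.snd = ν),
    ∫⁻ p, ENNReal.ofReal (‖p.1 - p.2‖ ^ 2) ∂π


/-- Static Schrödinger--Bass cost `C^β(x, η)`. -/
def SBcost {d : ℕ} (β : ℝ) (x : Euc d) (η : Measure (Euc d)) : ℝ≥0∞ :=
  ⨅ (κ : Measure (Euc d))
      (_ : IsProbabilityMeasure κ ∧ FiniteSecondMoment κ ∧ bary κ = bary η),
    relEnt κ (gaussian x) + ENNReal.ofReal (β / 2) * W2sq κ η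

/-!
As `β → ∞`, the upper bound is `κ = η`. For the lower bound, approximate `H(η | γ_x)` from below by
the Donsker–Varadhan functional of some `g` in `C_c`. Since `g` is bounded and uniformly
continuous, `g z - g y ≤ ε + C ‖y - z‖²`, so replacing `η` by `κ` costs at most
`ε + C W₂²(κ, η)`, which the penalty absorbs once `β ≥ 2 C`. This gives the lower semicontinuity of
the entropy in quantitative form, with no compactness argument.

As `β → 0`, the Pythagorean identity `H(κ | γ_x) = H(κ | γ_b) + ½ |b - x|²`, valid when `κ` has
barycenter `b`, gives the lower bound for every competitor and shows that `κ = γ_b` attains it up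
to the vanishing term `(β / 2) W₂²(γ_b, η)`.
-/

open InformationTheory
open scoped NNReal

section DonskerVaradhan

variable {α : Type*} [MeasurableSpace α] {μ ν : Measure α} {f g : α → ℝ} {c : ℝ≥0∞} {M : ℝ}

lemma ofReal_integral_le_lintegral_ofReal (μ : Measure α) (f : α → ℝ) :
    ENNReal.ofReal (∫ a, f a ∂μ) ≤ ∫⁻ a, ENNReal.ofReal (f a) ∂μ := by
  by_cases hf : Integrable f μ
  · rw [integral_eq_lintegral_pos_part_sub_lintegral_neg_part hf]
    exact (ENNReal.ofReal_le_ofReal (sub_le_self _ ENNReal.toReal_nonneg)).trans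
      ENNReal.ofReal_toReal_le
  · simp [integral_undef hf]

/-- The Donsker–Varadhan functional `∫ f dμ - ∫ (eᶠ - 1) dν`, whose supremum over `f` is the
Kullback–Leibler divergence of `μ` with respect to `ν`. The integrated form `∫ (eᶠ - 1) dν`
replaces the usual `log ∫ eᶠ dν`: it comes from a pointwise Young inequality and needs no
normalization of the measures. -/
def donskerVaradhan (μ ν : Measure α) (f : α → ℝ) : ℝ :=
  ∫ a, f a ∂μ - ∫ a, (Real.exp (f a) - 1) ∂ν

lemma mul_sub_exp_sub_one_le_klFun {h : ℝ} (hh : 0 ≤ h) (t : ℝ) :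
    h * t - (Real.exp t - 1) ≤ klFun h := by
  rw [klFun_apply]
  rcases hh.eq_or_lt with rfl | hpos
  · simp only [zero_mul, Real.log_zero]
    linarith [Real.exp_pos t]
  · have hexp := Real.add_one_le_exp (t - Real.log h)
    rw [Real.exp_sub, Real.exp_log hpos, le_div_iff₀ hpos] at hexp
    linarith

lemma integrable_of_abs_le [IsFiniteMeasure μ] (hf : AEStronglyMeasurable f μ)
    (hM : ∀ a, |f a| ≤ M) : Integrable f μ :=
  .of_bound hf M (ae_of_all _ hM)

lemma integrable_exp_of_abs_le [IsFiniteMeasure μ] (hf : AEStronglyMeasurable f μ)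
    (hM : ∀ a, |f a| ≤ M) : Integrable (fun a => Real.exp (f a)) μ :=
  .of_bound (Real.continuous_exp.comp_aestronglyMeasurable hf) (Real.exp M) <|
    ae_of_all _ fun a => by simpa using (abs_le.1 (hM a)).2

lemma donskerVaradhan_eq_integral_rnDeriv [IsFiniteMeasure μ] [IsFiniteMeasure ν] (hμν : μ ≪ ν)
    (hf : Integrable f μ) (hexp : Integrable (fun a => Real.exp (f a)) ν) :
    donskerVaradhan μ ν f =
      ∫ a, ((μ.rnDeriv ν a).toReal * f a - (Real.exp (f a) - 1)) ∂ν := by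
  have hint : Integrable (fun a => (μ.rnDeriv ν a).toReal * f a) ν :=
    (integrable_rnDeriv_smul_iff hμν).2 hf
  have hexp_sub : Integrable (fun a => Real.exp (f a) - 1) ν := hexp.sub (integrable_const 1)
  rw [integral_sub hint hexp_sub, donskerVaradhan, ← integral_rnDeriv_smul hμν]
  simp only [smul_eq_mul]

theorem ofReal_donskerVaradhan_le_klDiv [IsFiniteMeasure μ] [IsFiniteMeasure ν]
    (hf : Integrable f μ) (hexp : Integrable (fun a => Real.exp (f a)) ν) :
    ENNReal.ofReal (donskerVaradhan μ ν f) ≤ klDiv μ ν := by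
  by_cases hμν : μ ≪ ν
  · rw [donskerVaradhan_eq_integral_rnDeriv hμν hf hexp, klDiv_eq_lintegral_klFun_of_ac hμν]
    refine (ofReal_integral_le_lintegral_ofReal _ _).trans (lintegral_mono fun a => ?_)
    exact ENNReal.ofReal_le_ofReal (mul_sub_exp_sub_one_le_klFun ENNReal.toReal_nonneg _)
  · simp [klDiv_of_not_ac hμν]

lemma exists_bounded_lt_donskerVaradhan_of_not_ac [IsFiniteMeasure μ] (hμν : ¬ μ ≪ ν)
    (hc : c ≠ ⊤) :
    ∃ (f : α → ℝ) (M : ℝ), Measurable f ∧ (∀ a, |f a| ≤ M) ∧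
      c < ENNReal.ofReal (donskerVaradhan μ ν f) := by
  obtain ⟨A, hA, hνA, hμA⟩ : ∃ A, MeasurableSet A ∧ ν A = 0 ∧ μ A ≠ 0 := by
    by_contra! h
    exact hμν (.mk h)
  have hμA_pos : 0 < μ.real A := ENNReal.toReal_pos hμA (measure_ne_top _ _)
  set t : ℝ := (c.toReal + 1) / μ.real A
  have hexp : ∫ a, (Real.exp (A.indicator (fun _ => t) a) - 1) ∂ν = 0 := by
    refine integral_eq_zero_of_ae ?_
    filter_upwards [measure_eq_zero_iff_ae_notMem.1 hνA] with a ha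
    simp [ha]
  have hdv : donskerVaradhan μ ν (A.indicator fun _ => t) = c.toReal + 1 := by
    rw [donskerVaradhan, hexp, integral_indicator_const _ hA, sub_zero, smul_eq_mul,
      mul_div_cancel₀ _ hμA_pos.ne']
  refine ⟨A.indicator fun _ => t, |t|, measurable_const.indicator hA, fun a => ?_, ?_⟩
  · exact norm_indicator_le_norm_self (fun _ => t) a
  · rw [hdv, ENNReal.lt_ofReal_iff_toReal_lt hc]
    exact lt_add_one _

/-- Truncation of `h` to `[1 / (n + 1), n + 1]`, so that `log (truncate n h)` is a bounded
approximation of the optimal Donsker–Varadhan function `log h`. -/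
def truncate (n : ℕ) (h : ℝ) : ℝ := max (1 / (n + 1)) (min (n + 1) h)

lemma truncate_pos (n : ℕ) (h : ℝ) : 0 < truncate n h :=
  lt_max_of_lt_left (by positivity)

lemma abs_log_truncate_le (n : ℕ) (h : ℝ) : |Real.log (truncate n h)| ≤ Real.log (n + 1) := by
  have hone : 1 / (n + 1 : ℝ) ≤ n + 1 := (Nat.one_div_le_one_div n.zero_le).trans (by simp)
  rw [abs_le, ← Real.log_inv, ← one_div]
  exact ⟨Real.log_le_log (by positivity) (le_max_left _ _),
    Real.log_le_log (truncate_pos n h) (max_le hone (min_le_left _ _))⟩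

lemma measurable_truncate (n : ℕ) : Measurable (truncate n) := by
  unfold truncate
  fun_prop

lemma tendsto_truncate {h : ℝ} (hh : 0 ≤ h) :
    Tendsto (fun n => truncate n h) atTop (𝓝 h) := by
  have hmin : Tendsto (fun n : ℕ => min (n + 1 : ℝ) h) atTop (𝓝 h) :=
    tendsto_const_nhds.congr' <| by
      filter_upwards [eventually_ge_atTop ⌈h⌉₊] with n hn
      exact (min_eq_right ((Nat.ceil_le.1 hn).trans (by simp))).symm
  simpa [truncate, hh] using tendsto_one_div_add_atTop_nhds_zero_nat.max hmin

lemma sub_truncate_mul_log_truncate_nonneg (n : ℕ) (h : ℝ) :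
    0 ≤ (h - truncate n h) * Real.log (truncate n h) := by
  have hinv : 1 / (n + 1 : ℝ) ≤ 1 := by simpa using Nat.one_div_le_one_div (α := ℝ) n.zero_le
  have hone : (1 : ℝ) ≤ n + 1 := by simp
  unfold truncate
  rcases le_total (n + 1 : ℝ) h with hlarge | hle
  · rw [min_eq_left hlarge, max_eq_right (hinv.trans hone)]
    exact mul_nonneg (sub_nonneg.2 hlarge) (Real.log_nonneg hone)
  rw [min_eq_right hle]
  rcases le_total (1 / (n + 1 : ℝ)) h with hmid | hsmall
  · rw [max_eq_right hmid, sub_self, zero_mul]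
  · rw [max_eq_left hsmall]
    exact mul_nonneg_of_nonpos_of_nonpos (sub_nonpos.2 hsmall)
      (Real.log_nonpos (by positivity) hinv)

lemma mul_log_truncate_sub_nonneg (n : ℕ) (h : ℝ) :
    0 ≤ h * Real.log (truncate n h) - (truncate n h - 1) := by
  have hkl := klFun_nonneg (truncate_pos n h).le
  rw [klFun_apply] at hkl
  linarith [sub_truncate_mul_log_truncate_nonneg n h]

lemma tendsto_mul_log_truncate_sub {h : ℝ} (hh : 0 ≤ h) :
    Tendsto (fun n => h * Real.log (truncate n h) - (truncate n h - 1)) atTop (𝓝 (klFun h)) := by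
  have hlim := tendsto_truncate hh
  rw [show klFun h = h * Real.log h - (h - 1) by rw [klFun_apply]; ring]
  rcases hh.eq_or_lt with rfl | hpos
  · simpa using (hlim.sub_const 1).neg
  · exact ((hlim.log hpos.ne').const_mul h).sub (hlim.sub_const 1)

lemma exists_bounded_lt_donskerVaradhan_of_ac [IsFiniteMeasure μ] [IsFiniteMeasure ν]
    (hμν : μ ≪ ν) (hc : c < klDiv μ ν) :
    ∃ (f : α → ℝ) (M : ℝ), Measurable f ∧ (∀ a, |f a| ≤ M) ∧
      c < ENNReal.ofReal (donskerVaradhan μ ν f) := by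
  set h : α → ℝ := fun a => (μ.rnDeriv ν a).toReal
  have hh : Measurable h := (Measure.measurable_rnDeriv μ ν).ennreal_toReal
  have htrunc (n : ℕ) : Measurable fun a => truncate n (h a) := (measurable_truncate n).comp hh
  set G : ℕ → α → ℝ := fun n a => h a * Real.log (truncate n (h a)) - (truncate n (h a) - 1)
    with hG
  have hG_meas (n : ℕ) : Measurable (G n) := by
    have := htrunc n
    fun_prop
  have fatou : klDiv μ ν ≤ liminf (fun n => ∫⁻ a, ENNReal.ofReal (G n a) ∂ν) atTop :=
    calc klDiv μ ν
      _ = ∫⁻ a, liminf (fun n => ENNReal.ofReal (G n a)) atTop ∂ν := by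
        rw [klDiv_eq_lintegral_klFun_of_ac hμν]
        exact lintegral_congr fun a => (ENNReal.tendsto_ofReal
          (tendsto_mul_log_truncate_sub ENNReal.toReal_nonneg)).liminf_eq.symm
      _ ≤ _ := lintegral_liminf_le fun n => (hG_meas n).ennreal_ofReal
  obtain ⟨n, hn⟩ := (eventually_lt_of_lt_liminf (hc.trans_le fatou)).exists
  set f : α → ℝ := fun a => Real.log (truncate n (h a))
  have hf : Measurable f := (htrunc n).log
  have hf_le (a : α) : |f a| ≤ Real.log (n + 1) := abs_log_truncate_le n (h a)
  have hfμ := integrable_of_abs_le (μ := μ) hf.aestronglyMeasurable hf_le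
  have hexp := integrable_exp_of_abs_le (μ := ν) hf.aestronglyMeasurable hf_le
  have hG_eq : (fun a => h a * f a - (Real.exp (f a) - 1)) = G n := by
    ext a
    simp only [f, hG, Real.exp_log (truncate_pos n (h a))]
  have hG_int : Integrable (G n) ν :=
    hG_eq ▸ ((integrable_rnDeriv_smul_iff hμν).2 hfμ).sub (hexp.sub (integrable_const 1))
  refine ⟨f, Real.log (n + 1), hf, hf_le, ?_⟩
  rwa [donskerVaradhan_eq_integral_rnDeriv hμν hfμ hexp, hG_eq,
    ofReal_integral_eq_lintegral_ofReal hG_int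
      (ae_of_all _ fun a => mul_log_truncate_sub_nonneg n (h a))]

theorem exists_bounded_lt_donskerVaradhan [IsFiniteMeasure μ] [IsFiniteMeasure ν]
    (hc : c < klDiv μ ν) :
    ∃ (f : α → ℝ) (M : ℝ), Measurable f ∧ (∀ a, |f a| ≤ M) ∧
      c < ENNReal.ofReal (donskerVaradhan μ ν f) := by
  by_cases hμν : μ ≪ ν
  · exact exists_bounded_lt_donskerVaradhan_of_ac hμν hc
  · exact exists_bounded_lt_donskerVaradhan_of_not_ac hμν hc.ne_top

lemma donskerVaradhan_sub_le_mul_integral_abs_sub [IsFiniteMeasure μ] [IsFiniteMeasure ν]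
    (hf : AEStronglyMeasurable f (μ + ν)) (hg : AEStronglyMeasurable g (μ + ν))
    (hfM : ∀ a, |f a| ≤ M) (hgM : ∀ a, |g a| ≤ M) :
    donskerVaradhan μ ν f - donskerVaradhan μ ν g ≤
      (1 + Real.exp M) * ∫ a, |f a - g a| ∂(μ + ν) := by
  obtain ⟨hfμ, hfν⟩ := aestronglyMeasurable_add_measure_iff.1 hf
  obtain ⟨hgμ, hgν⟩ := aestronglyMeasurable_add_measure_iff.1 hg
  have hfi := integrable_of_abs_le hfμ hfM
  have hgi := integrable_of_abs_le hgμ hgM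
  have hdist : Integrable (fun a => |f a - g a|) (μ + ν) :=
    ((integrable_of_abs_le hf hfM).sub (integrable_of_abs_le hg hgM)).abs
  obtain ⟨hdistμ, hdistν⟩ := integrable_add_measure.1 hdist
  have hfe : Integrable (fun a => Real.exp (f a) - 1) ν :=
    (integrable_exp_of_abs_le hfν hfM).sub (integrable_const 1)
  have hge : Integrable (fun a => Real.exp (g a) - 1) ν :=
    (integrable_exp_of_abs_le hgν hgM).sub (integrable_const 1)
  have hlin : ∫ a, f a ∂μ - ∫ a, g a ∂μ ≤ ∫ a, |f a - g a| ∂μ := by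
    rw [← integral_sub hfi hgi]
    exact integral_mono (hfi.sub hgi) hdistμ fun a => le_abs_self _
  have hexp : ∫ a, (Real.exp (g a) - 1) ∂ν - ∫ a, (Real.exp (f a) - 1) ∂ν ≤
      Real.exp M * ∫ a, |f a - g a| ∂ν := by
    rw [← integral_sub hge hfe, ← integral_const_mul]
    refine integral_mono (hge.sub hfe) (hdistν.const_mul _) fun a => ?_
    calc Real.exp (g a) - 1 - (Real.exp (f a) - 1)
      _ = Real.exp (g a) * (1 - Real.exp (f a - g a)) := by
        rw [mul_sub, ← Real.exp_add]
        ring_nf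
      _ ≤ Real.exp (g a) * |f a - g a| := by
        gcongr
        linarith [Real.add_one_le_exp (f a - g a), neg_le_abs (f a - g a)]
      _ ≤ Real.exp M * |f a - g a| := by
        gcongr
        exact (abs_le.1 (hgM a)).2
  have hμ_nonneg : 0 ≤ Real.exp M * ∫ a, |f a - g a| ∂μ := by positivity
  have hν_nonneg : 0 ≤ ∫ a, |f a - g a| ∂ν := by positivity
  rw [integral_add_measure hdistμ hdistν]
  unfold donskerVaradhan
  linarith

variable [TopologicalSpace α] [NormalSpace α] [R1Space α] [WeaklyLocallyCompactSpace α]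
  [BorelSpace α]

lemma exists_hasCompactSupport_integral_abs_sub_le [μ.Regular] (hf : Integrable f μ)
    (hfM : ∀ a, |f a| ≤ M) (hM : 0 ≤ M) {ε : ℝ} (hε : 0 < ε) :
    ∃ g : α → ℝ, Continuous g ∧ HasCompactSupport g ∧ (∀ a, |g a| ≤ M) ∧
      ∫ a, |f a - g a| ∂μ ≤ ε := by
  obtain ⟨g, hg_supp, hg_le, hg_cont, hg_int⟩ := hf.exists_hasCompactSupport_integral_sub_le hε
  let clip (t : ℝ) : ℝ := max (-M) (min M t)
  have hclip_dist (s t : ℝ) : |clip s - clip t| ≤ |s - t| := by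
    simp only [clip, max_comm (-M), min_comm M]
    exact (abs_max_sub_max_le_abs _ _ _).trans (by simpa using abs_min_sub_min_le_max s M t M)
  have hclip_f (a : α) : clip (f a) = f a := by
    obtain ⟨hlow, hup⟩ := abs_le.1 (hfM a)
    simp [clip, hlow, hup]
  refine ⟨fun a => clip (g a), by fun_prop, hg_supp.comp_left (g := clip) (by simp [clip, hM]),
    fun a => abs_le.2 ⟨le_max_left _ _, max_le (by linarith) (min_le_left _ _)⟩, ?_⟩
  refine le_trans (integral_mono_of_nonneg (ae_of_all _ fun _ => abs_nonneg _)
    (hf.sub hg_int).norm (ae_of_all _ fun a => ?_)) hg_le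
  simpa only [hclip_f, Pi.sub_apply, Real.norm_eq_abs] using hclip_dist (f a) (g a)

theorem exists_hasCompactSupport_lt_donskerVaradhan [IsFiniteMeasure μ] [IsFiniteMeasure ν]
    [(μ + ν).Regular] (hc : c < klDiv μ ν) :
    ∃ g : α → ℝ, Continuous g ∧ HasCompactSupport g ∧
      c < ENNReal.ofReal (donskerVaradhan μ ν g) := by
  obtain ⟨f, M, hf, hfM, hcf⟩ := exists_bounded_lt_donskerVaradhan hc
  have hc_top : c ≠ ⊤ := hc.ne_top
  rw [ENNReal.lt_ofReal_iff_toReal_lt hc_top] at hcf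
  have hfM' (a : α) : |f a| ≤ |M| := (hfM a).trans (le_abs_self M)
  set ε : ℝ := (donskerVaradhan μ ν f - c.toReal) / (2 * (1 + Real.exp |M|)) with hε
  have hε_pos : 0 < ε := div_pos (sub_pos.2 hcf) (by positivity)
  obtain ⟨g, hg, hg_supp, hgM, hfg⟩ := exists_hasCompactSupport_integral_abs_sub_le
    (integrable_of_abs_le (μ := μ + ν) hf.aestronglyMeasurable hfM') hfM' (abs_nonneg M) hε_pos
  refine ⟨g, hg, hg_supp, (ENNReal.lt_ofReal_iff_toReal_lt hc_top).2 ?_⟩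
  have hdist := calc donskerVaradhan μ ν f - donskerVaradhan μ ν g
    _ ≤ (1 + Real.exp |M|) * ∫ a, |f a - g a| ∂(μ + ν) :=
      donskerVaradhan_sub_le_mul_integral_abs_sub hf.aestronglyMeasurable
        (hg.measurable.aestronglyMeasurable) hfM' hgM
    _ ≤ (1 + Real.exp |M|) * ε := by gcongr
    _ = (donskerVaradhan μ ν f - c.toReal) / 2 := by rw [hε]; field_simp
  linarith

end DonskerVaradhan

section Transport

lemma exists_sub_le_add_mul_dist_sq {α : Type*} [PseudoMetricSpace α] {f : α → ℝ} {M : ℝ}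
    (hf : UniformContinuous f) (hfM : ∀ y, |f y| ≤ M) {ε : ℝ} (hε : 0 < ε) :
    ∃ C > 0, ∀ y z, f z - f y ≤ ε + C * dist y z ^ 2 := by
  obtain ⟨δ, hδ, hclose⟩ := Metric.uniformContinuous_iff.1 hf ε hε
  refine ⟨(2 * |M| + 1) / δ ^ 2, by positivity, fun y z => ?_⟩
  rcases lt_or_ge (dist y z) δ with hlt | hge
  · have hfyz := hclose hlt
    rw [dist_comm, Real.dist_eq] at hfyz
    have hnonneg : 0 ≤ (2 * |M| + 1) / δ ^ 2 * dist y z ^ 2 := by positivity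
    linarith [le_abs_self (f z - f y)]
  · calc f z - f y
      _ ≤ 2 * |M| + 1 := by
        linarith [(abs_le.1 (hfM z)).2, (abs_le.1 (hfM y)).1, le_abs_self M]
      _ = (2 * |M| + 1) / δ ^ 2 * δ ^ 2 := by field_simp
      _ ≤ (2 * |M| + 1) / δ ^ 2 * dist y z ^ 2 := by gcongr
      _ ≤ ε + (2 * |M| + 1) / δ ^ 2 * dist y z ^ 2 := le_add_of_nonneg_left hε.le

lemma ofReal_integral_snd_sub_integral_fst_le {α : Type*} [MeasurableSpace α]
    {π : Measure (α × α)} {f : α → ℝ} (hfst : Integrable f π.fst) (hsnd : Integrable f π.snd) :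
    ENNReal.ofReal (∫ y, f y ∂π.snd - ∫ y, f y ∂π.fst) ≤
      ∫⁻ p, ENNReal.ofReal (f p.2 - f p.1) ∂π := by
  have hf_snd : ∫ y, f y ∂π.snd = ∫ p, f p.2 ∂π :=
    integral_map measurable_snd.aemeasurable hsnd.aestronglyMeasurable
  have hf_fst : ∫ y, f y ∂π.fst = ∫ p, f p.1 ∂π :=
    integral_map measurable_fst.aemeasurable hfst.aestronglyMeasurable
  have hint_snd : Integrable (fun p : α × α => f p.2) π := hsnd.comp_measurable measurable_snd
  have hint_fst : Integrable (fun p : α × α => f p.1) π := hfst.comp_measurable measurable_fst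
  rw [hf_snd, hf_fst, ← integral_sub hint_snd hint_fst]
  exact ofReal_integral_le_lintegral_ofReal _ _

variable {d : ℕ} {μ κ η γ : Measure (Euc d)} {c : ℝ≥0∞}

lemma ofReal_integral_sub_le_add_mul_W2sq [IsProbabilityMeasure κ] {f : Euc d → ℝ} {ε C : ℝ}
    (hfκ : Integrable f κ) (hfη : Integrable f η) (hC : 0 < C)
    (h : ∀ y z, f z - f y ≤ ε + C * ‖y - z‖ ^ 2) :
    ENNReal.ofReal (∫ y, f y ∂η - ∫ y, f y ∂κ) ≤
      ENNReal.ofReal ε + ENNReal.ofReal C * W2sq κ η := by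
  simp only [W2sq, ENNReal.mul_iInf_of_ne (ENNReal.ofReal_pos.2 hC).ne' ENNReal.ofReal_ne_top,
    ENNReal.add_iInf]
  refine le_iInf₂ fun π hπ => ?_
  obtain ⟨rfl, rfl⟩ := hπ
  have hπ_univ : π univ = 1 := by rw [← Measure.fst_univ, measure_univ]
  calc ENNReal.ofReal (∫ y, f y ∂π.snd - ∫ y, f y ∂π.fst)
    _ ≤ ∫⁻ p, ENNReal.ofReal (f p.2 - f p.1) ∂π :=
      ofReal_integral_snd_sub_integral_fst_le hfκ hfη
    _ ≤ ∫⁻ p, (ENNReal.ofReal ε + ENNReal.ofReal C * ENNReal.ofReal (‖p.1 - p.2‖ ^ 2)) ∂π := by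
      gcongr with p
      rw [← ENNReal.ofReal_mul' (by positivity)]
      exact (ENNReal.ofReal_le_ofReal (h p.1 p.2)).trans ENNReal.ofReal_add_le
    _ = _ := by
      rw [lintegral_add_left measurable_const, lintegral_const, hπ_univ, mul_one,
        lintegral_const_mul' _ _ ENNReal.ofReal_ne_top]

lemma W2sq_self (μ : Measure (Euc d)) : W2sq μ μ = 0 := by
  set diag : Measure (Euc d × Euc d) := μ.map fun y => (y, y)
  have hfst : diag.fst = μ := (Measure.fst_map_prodMk measurable_id').trans Measure.map_id'
  have hsnd : diag.snd = μ := (Measure.snd_map_prodMk measurable_id').trans Measure.map_id'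
  refine nonpos_iff_eq_zero.1 ((iInf₂_le diag ⟨hfst, hsnd⟩).trans_eq ?_)
  rw [lintegral_map (by fun_prop) (by fun_prop)]
  simp

lemma finiteSecondMoment_iff_memLp_two : FiniteSecondMoment μ ↔ MemLp id 2 μ := by
  rw [memLp_two_iff_integrable_sq_norm aestronglyMeasurable_id, FiniteSecondMoment,
    lt_top_iff_ne_top,
    lintegral_ofReal_ne_top_iff_integrable (by fun_prop) (ae_of_all _ fun _ => by positivity)]
  rfl

lemma W2sq_lt_top [IsProbabilityMeasure κ] [IsProbabilityMeasure η] (hκ : FiniteSecondMoment κ)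
    (hη : FiniteSecondMoment η) : W2sq κ η < ⊤ := by
  rw [finiteSecondMoment_iff_memLp_two] at hκ hη
  have hint : Integrable (fun p : Euc d × Euc d => ‖p.1 - p.2‖ ^ 2) (κ.prod η) :=
    ((hκ.comp_fst η).sub (hη.comp_snd κ)).integrable_norm_pow two_ne_zero
  refine (iInf₂_le (κ.prod η) ⟨Measure.fst_prod, Measure.snd_prod⟩).trans_lt ?_
  exact hint.lintegral_lt_top

lemma relEnt_eq_klDiv (μ ν : Measure (Euc d)) [IsProbabilityMeasure μ] [IsProbabilityMeasure ν] :
    relEnt μ ν = klDiv μ ν := by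
  classical
  simp [relEnt, klDiv_def, llr_def]

theorem exists_le_relEnt_add_mul_W2sq [IsProbabilityMeasure η] [IsProbabilityMeasure γ]
    (hc : c < relEnt η γ) :
    ∃ C : ℝ, ∀ κ : Measure (Euc d), IsProbabilityMeasure κ →
      c ≤ relEnt κ γ + ENNReal.ofReal C * W2sq κ η := by
  rw [relEnt_eq_klDiv] at hc
  obtain ⟨g, hg, hg_supp, hcg⟩ := exists_hasCompactSupport_lt_donskerVaradhan hc
  obtain ⟨M, hgM⟩ := hg_supp.exists_bound_of_continuous hg
  obtain ⟨r, hr, hcr⟩ := ENNReal.lt_iff_exists_add_pos_lt.1 hcg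
  obtain ⟨C, hC, hgC⟩ := exists_sub_le_add_mul_dist_sq
    (hg_supp.uniformContinuous_of_continuous hg) hgM (NNReal.coe_pos.2 hr)
  have hg_int (μ : Measure (Euc d)) [IsFiniteMeasure μ] : Integrable g μ :=
    integrable_of_abs_le hg.aestronglyMeasurable hgM
  refine ⟨C, fun κ _ => ?_⟩
  have htransport := ofReal_integral_sub_le_add_mul_W2sq (hg_int κ) (hg_int η) hC
    fun y z => by simpa only [dist_eq_norm] using hgC y z
  have hexp : Integrable (fun y => Real.exp (g y)) γ :=
    integrable_exp_of_abs_le hg.aestronglyMeasurable hgM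
  refine (ENNReal.add_le_add_iff_right (ENNReal.coe_ne_top (r := r))).1 ?_
  calc c + r
    _ ≤ ENNReal.ofReal (donskerVaradhan η γ g) := hcr.le
    _ = ENNReal.ofReal (donskerVaradhan κ γ g + (∫ y, g y ∂η - ∫ y, g y ∂κ)) := by
      simp only [donskerVaradhan]
      ring_nf
    _ ≤ relEnt κ γ + (ENNReal.ofReal r + ENNReal.ofReal C * W2sq κ η) := by
      rw [relEnt_eq_klDiv]
      exact ENNReal.ofReal_add_le.trans
        (add_le_add (ofReal_donskerVaradhan_le_klDiv (hg_int κ) hexp) htransport)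
    _ = relEnt κ γ + ENNReal.ofReal C * W2sq κ η + r := by
      rw [ENNReal.ofReal_coe_nnreal]
      ring

end Transport

section Tilting

theorem klDiv_eq_klDiv_tilted_add {α : Type*} [MeasurableSpace α] {μ ν : Measure α}
    [IsProbabilityMeasure μ] [IsProbabilityMeasure ν] {f : α → ℝ} (hf : Integrable f μ)
    (hexp : Integrable (fun a => Real.exp (f a)) ν)
    (hnonneg : 0 ≤ ∫ a, f a ∂μ - Real.log (∫ a, Real.exp (f a) ∂ν)) :
    klDiv μ ν = klDiv μ (ν.tilted f) +
      ENNReal.ofReal (∫ a, f a ∂μ - Real.log (∫ a, Real.exp (f a) ∂ν)) := by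
  have : IsProbabilityMeasure (ν.tilted f) := isProbabilityMeasure_tilted hexp
  by_cases hμν : μ ≪ ν
  swap
  · have hμν' : ¬ μ ≪ ν.tilted f := fun h => hμν (h.trans (tilted_absolutelyContinuous ν f))
    rw [klDiv_of_not_ac hμν, klDiv_of_not_ac hμν', top_add]
  have hμν' : μ ≪ ν.tilted f := hμν.trans (absolutelyContinuous_tilted hexp)
  by_cases hllr : Integrable (llr μ ν) μ
  swap
  · have hllr' : ¬ Integrable (llr μ (ν.tilted f)) μ := fun h => hllr <| by
      refine ((h.add hf).sub (integrable_const (Real.log (∫ a, Real.exp (f a) ∂ν)))).congr ?_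
      filter_upwards [llr_tilted_right hμν hexp] with a ha
      simp only [Pi.add_apply, Pi.sub_apply, ha]
      ring
    rw [klDiv_of_not_integrable hllr, klDiv_of_not_integrable hllr', top_add]
  have hllr' := integrable_llr_tilted_right hμν hf hllr hexp
  have hkl_nonneg := integral_llr_add_sub_measure_univ_nonneg hμν' hllr'
  rw [klDiv_of_ac_of_integrable hμν hllr, klDiv_of_ac_of_integrable hμν' hllr',
    ← ENNReal.ofReal_add hkl_nonneg hnonneg, integral_llr_tilted_right hμν hf hexp hllr]
  simp only [probReal_univ]
  ring_nf

end Tilting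

section Gaussian

variable {V : Type*} [NormedAddCommGroup V]

/-- The log-likelihood ratio `log (dγ_b / dγ_x)` of the Gaussians with identity covariance and means
`b` and `x`. Tilting by it moves the mean of the Gaussian from `x` to `b`. -/
def gaussianLLR (x b y : V) : ℝ := ‖y - x‖ ^ 2 / 2 - ‖y - b‖ ^ 2 / 2

lemma neg_norm_sub_sq_div_two_add_gaussianLLR (x b : V) :
    ((fun y => -‖y - x‖ ^ 2 / 2) + gaussianLLR x b) = fun y => -‖y - b‖ ^ 2 / 2 := by
  ext y
  simp only [Pi.add_apply, gaussianLLR]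
  ring

variable [InnerProductSpace ℝ V]

lemma gaussianLLR_eq_inner (x b y : V) :
    gaussianLLR x b y = ⟪b - x, y - x⟫ - ‖b - x‖ ^ 2 / 2 := by
  have hexpand := norm_sub_sq_real (y - x) (b - x)
  rw [sub_sub_sub_cancel_right, real_inner_comm] at hexpand
  rw [gaussianLLR, hexpand]
  ring

variable [MeasurableSpace V]

lemma integrable_gaussianLLR {μ : Measure V} [IsFiniteMeasure μ] (hμ : Integrable id μ)
    (x b : V) : Integrable (gaussianLLR x b) μ := by
  simp only [funext (gaussianLLR_eq_inner x b)]
  exact ((hμ.sub (integrable_const x)).const_inner (b - x)).sub (integrable_const _)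

lemma integral_gaussianLLR [CompleteSpace V] {μ : Measure V} [IsProbabilityMeasure μ]
    (hμ : Integrable id μ) (x : V) :
    ∫ y, gaussianLLR x (∫ z, z ∂μ) y ∂μ = ‖(∫ z, z ∂μ) - x‖ ^ 2 / 2 := by
  set b : V := ∫ z, z ∂μ
  have hid : Integrable (fun y => y) μ := hμ
  have hsub : Integrable (fun y => y - x) μ := hid.sub (integrable_const x)
  have hmean : ∫ y, (y - x) ∂μ = b - x := by
    rw [integral_sub hid (integrable_const x), integral_const, probReal_univ, one_smul]
  simp only [gaussianLLR_eq_inner]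
  rw [integral_sub (hsub.const_inner (b - x)) (integrable_const _), integral_inner hsub, hmean,
    integral_const, probReal_univ, one_smul, real_inner_self_eq_norm_sq]
  ring

variable [FiniteDimensional ℝ V] [BorelSpace V]

lemma integral_exp_neg_norm_sub_sq_div_two (x : V) :
    ∫ y, Real.exp (-‖y - x‖ ^ 2 / 2) = (2 * Real.pi) ^ (Module.finrank ℝ V / 2 : ℝ) := by
  rw [integral_sub_right_eq_self fun y => Real.exp (-‖y‖ ^ 2 / 2)]
  convert GaussianFourier.integral_rexp_neg_mul_sq_norm (V := V) (b := 1 / 2) (by norm_num)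
    using 3 <;> ring_nf

lemma integrable_exp_neg_norm_sub_sq_div_two (x : V) :
    Integrable fun y => Real.exp (-‖y - x‖ ^ 2 / 2) := by
  refine .of_integral_ne_zero ?_
  rw [integral_exp_neg_norm_sub_sq_div_two]
  positivity

lemma charFun_tilted_neg_norm_sub_sq_div_two (x t : V) :
    charFun (volume.tilted fun y => -‖y - x‖ ^ 2 / 2) t =
      Complex.exp (⟪t, x⟫ * Complex.I - ‖t‖ ^ 2 / 2) := by
  set Z : ℝ := (2 * Real.pi) ^ (Module.finrank ℝ V / 2 : ℝ) with hZ
  have hZ_pos : 0 < Z := by positivity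
  have hZ_cast : (Z : ℂ) = (Real.pi / (1 / 2)) ^ (Module.finrank ℝ V / 2 : ℂ) := by
    rw [hZ, Complex.ofReal_cpow (by positivity)]
    push_cast
    ring_nf
  have hfourier := GaussianFourier.integral_cexp_neg_mul_sq_norm_add (b := 1 / 2) (by norm_num)
    Complex.I t
  rw [← hZ_cast] at hfourier
  calc charFun (volume.tilted fun y => -‖y - x‖ ^ 2 / 2) t
    _ = ∫ y, (Real.exp (-‖y - x‖ ^ 2 / 2) / Z) • Complex.exp (⟪y, t⟫ * Complex.I) := by
      rw [charFun_apply, integral_tilted, integral_exp_neg_norm_sub_sq_div_two]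
    _ = ∫ y, (Real.exp (-‖y‖ ^ 2 / 2) / Z) • Complex.exp (⟪y + x, t⟫ * Complex.I) := by
      rw [← integral_add_right_eq_self _ x]
      simp only [add_sub_cancel_right]
    _ = ∫ y, Complex.exp (⟪t, x⟫ * Complex.I) / Z *
          Complex.exp (-(1 / 2) * ‖y‖ ^ 2 + Complex.I * ⟪t, y⟫) := by
      congr with y
      rw [Complex.real_smul, inner_add_left, real_inner_comm t y, real_inner_comm t x]
      push_cast
      rw [div_mul_eq_mul_div, div_mul_eq_mul_div, ← Complex.exp_add, ← Complex.exp_add]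
      ring_nf
    _ = Complex.exp (⟪t, x⟫ * Complex.I - ‖t‖ ^ 2 / 2) := by
      rw [integral_const_mul, hfourier, ← mul_assoc,
        div_mul_cancel₀ _ (Complex.ofReal_ne_zero.2 hZ_pos.ne'), ← Complex.exp_add, Complex.I_sq]
      ring_nf

variable {d : ℕ} {κ : Measure (Euc d)}

lemma gaussian_eq_tilted (x : Euc d) :
    gaussian x = volume.tilted fun y => -‖y - x‖ ^ 2 / 2 := by
  rw [gaussian, Measure.tilted, integral_exp_neg_norm_sub_sq_div_two, finrank_euclideanSpace_fin]
  congr with y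
  rw [gaussDensity, neg_div, Real.rpow_neg (by positivity), ← div_eq_inv_mul]

instance isProbabilityMeasure_gaussian (x : Euc d) : IsProbabilityMeasure (gaussian x) :=
  gaussian_eq_tilted x ▸ isProbabilityMeasure_tilted (integrable_exp_neg_norm_sub_sq_div_two x)

lemma gaussian_eq_multivariateGaussian (x : Euc d) : gaussian x = multivariateGaussian x 1 := by
  refine Measure.ext_of_charFun (funext fun t => ?_)
  have hdot : t.ofLp ⬝ᵥ t.ofLp = ‖t‖ ^ 2 := by
    rw [← real_inner_self_eq_norm_sq, EuclideanSpace.inner_eq_star_dotProduct, star_trivial]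
  rw [gaussian_eq_tilted, charFun_tilted_neg_norm_sub_sq_div_two,
    charFun_multivariateGaussian Matrix.PosSemidef.one, Matrix.one_mulVec, hdot, Complex.ofReal_pow]

lemma finiteSecondMoment_gaussian (x : Euc d) : FiniteSecondMoment (gaussian x) := by
  rw [finiteSecondMoment_iff_memLp_two, gaussian_eq_multivariateGaussian]
  exact IsGaussian.memLp_two_id

lemma bary_gaussian (x : Euc d) : bary (gaussian x) = x := by
  rw [bary, gaussian_eq_multivariateGaussian, integral_id_multivariateGaussian]

lemma gaussian_tilted_gaussianLLR (x b : Euc d) :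
    (gaussian x).tilted (gaussianLLR x b) = gaussian b := by
  rw [gaussian_eq_tilted x, tilted_tilted (integrable_exp_neg_norm_sub_sq_div_two x),
    neg_norm_sub_sq_div_two_add_gaussianLLR, gaussian_eq_tilted b]

lemma integral_exp_gaussianLLR (x b : Euc d) :
    ∫ y, Real.exp (gaussianLLR x b y) ∂gaussian x = 1 := by
  rw [gaussian_eq_tilted, integral_exp_tilted, neg_norm_sub_sq_div_two_add_gaussianLLR,
    integral_exp_neg_norm_sub_sq_div_two, integral_exp_neg_norm_sub_sq_div_two, div_self]
  positivity

lemma integrable_id_of_finiteSecondMoment [IsFiniteMeasure κ] (hκ : FiniteSecondMoment κ) :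
    Integrable id κ :=
  (finiteSecondMoment_iff_memLp_two.1 hκ).integrable one_le_two

theorem relEnt_gaussian_eq_add [IsProbabilityMeasure κ] (hκ : Integrable id κ) (x : Euc d) :
    relEnt κ (gaussian x) =
      relEnt κ (gaussian (bary κ)) + ENNReal.ofReal (1 / 2 * ‖bary κ - x‖ ^ 2) := by
  have hexp : Integrable (fun y => Real.exp (gaussianLLR x (bary κ) y)) (gaussian x) :=
    .of_integral_ne_zero (by rw [integral_exp_gaussianLLR]; exact one_ne_zero)
  have hgap : ∫ y, gaussianLLR x (bary κ) y ∂κ -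
      Real.log (∫ y, Real.exp (gaussianLLR x (bary κ) y) ∂gaussian x) =
        1 / 2 * ‖bary κ - x‖ ^ 2 := by
    rw [integral_exp_gaussianLLR, Real.log_one, sub_zero, bary, integral_gaussianLLR hκ]
    ring
  have hpyth := klDiv_eq_klDiv_tilted_add (integrable_gaussianLLR hκ x (bary κ)) hexp
    (hgap ▸ by positivity)
  rwa [hgap, gaussian_tilted_gaussianLLR, ← relEnt_eq_klDiv, ← relEnt_eq_klDiv] at hpyth

lemma relEnt_gaussian_gaussian (x b : Euc d) :
    relEnt (gaussian b) (gaussian x) = ENNReal.ofReal (1 / 2 * ‖b - x‖ ^ 2) := by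
  rw [relEnt_gaussian_eq_add (integrable_id_of_finiteSecondMoment (finiteSecondMoment_gaussian b)),
    bary_gaussian, relEnt_eq_klDiv, klDiv_self, zero_add]

end Gaussian

section Cost

variable {d : ℕ} {β : ℝ} {x : Euc d} {κ η : Measure (Euc d)}

lemma SBcost_le [IsProbabilityMeasure κ] (hκ : FiniteSecondMoment κ) (hbary : bary κ = bary η) :
    SBcost β x η ≤ relEnt κ (gaussian x) + ENNReal.ofReal (β / 2) * W2sq κ η :=
  iInf₂_le κ ⟨inferInstance, hκ, hbary⟩

lemma SBcost_le_relEnt [IsProbabilityMeasure η] (hη : FiniteSecondMoment η) :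
    SBcost β x η ≤ relEnt η (gaussian x) := by
  simpa [W2sq_self] using SBcost_le hη rfl (β := β) (x := x)

lemma SBcost_le_add_mul_W2sq_gaussian :
    SBcost β x η ≤ ENNReal.ofReal (1 / 2 * ‖bary η - x‖ ^ 2) +
      ENNReal.ofReal (β / 2) * W2sq (gaussian (bary η)) η :=
  relEnt_gaussian_gaussian x (bary η) ▸
    SBcost_le (finiteSecondMoment_gaussian _) (bary_gaussian _)

lemma le_SBcost : ENNReal.ofReal (1 / 2 * ‖bary η - x‖ ^ 2) ≤ SBcost β x η := by
  refine le_iInf₂ fun κ ⟨_, hκ, hbary⟩ => ?_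
  rw [relEnt_gaussian_eq_add (integrable_id_of_finiteSecondMoment hκ), hbary]
  exact le_add_self.trans le_self_add

theorem tendsto_SBcost_atTop [IsProbabilityMeasure η] (hη : FiniteSecondMoment η) :
    Tendsto (fun β : ℝ => SBcost β x η) atTop (𝓝 (relEnt η (gaussian x))) := by
  refine tendsto_order.2 ⟨fun c hc => ?_, fun c hc => .of_forall fun β =>
    (SBcost_le_relEnt hη).trans_lt hc⟩
  obtain ⟨c', hcc', hc'⟩ := exists_between hc
  obtain ⟨C, hC⟩ := exists_le_relEnt_add_mul_W2sq hc'
  filter_upwards [eventually_ge_atTop (2 * C)] with β hβ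
  refine hcc'.trans_le (le_iInf₂ fun κ hκ => (hC κ hκ.1).trans ?_)
  gcongr
  linarith

theorem tendsto_SBcost_nhdsGT_zero [IsProbabilityMeasure η] (hη : FiniteSecondMoment η) :
    Tendsto (fun β : ℝ => SBcost β x η) (𝓝[>] 0)
      (𝓝 (ENNReal.ofReal (1 / 2 * ‖bary η - x‖ ^ 2))) := by
  have hW2 : W2sq (gaussian (bary η)) η ≠ ⊤ :=
    (W2sq_lt_top (finiteSecondMoment_gaussian _) hη).ne
  have hcoeff : Tendsto (fun β : ℝ => ENNReal.ofReal (β / 2)) (𝓝[>] 0) (𝓝 0) := by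
    have hcont : Continuous fun β : ℝ => ENNReal.ofReal (β / 2) :=
      ENNReal.continuous_ofReal.comp (continuous_id.div_const 2)
    simpa using (hcont.tendsto 0).mono_left nhdsWithin_le_nhds
  have hupper := (ENNReal.Tendsto.mul_const hcoeff (.inr hW2)).const_add
    (ENNReal.ofReal (1 / 2 * ‖bary η - x‖ ^ 2))
  rw [zero_mul, add_zero] at hupper
  exact tendsto_of_tendsto_of_tendsto_of_le_of_le tendsto_const_nhds hupper
    (fun _ => le_SBcost) fun _ => SBcost_le_add_mul_W2sq_gaussian

end Cost

/-- Limits of the Schrödinger--Bass cost as `β → ∞` and `β → 0`. -/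
theorem SBcost_limits {d : ℕ} (x : Euc d) (η : Measure (Euc d))
    [IsProbabilityMeasure η] (hη : FiniteSecondMoment η) :
    Tendsto (fun β : ℝ => SBcost β x η) atTop (nhds (relEnt η (gaussian x))) ∧
    Tendsto (fun β : ℝ => SBcost β x η) (nhdsWithin 0 (Set.Ioi 0))
      (nhds (ENNReal.ofReal (1 / 2 * ‖bary η - x‖ ^ 2))) :=
  ⟨tendsto_SBcost_atTop hη, tendsto_SBcost_nhdsGT_zero hη⟩
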